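/- Let G be a finite simple graph and let D be a valid orientation of G with γ_t(D) = |V(G)|. Then G is 2-regular (every vertex has degree exactly 2), i.e., G is a disjoint union of cycles. -/

import Mathlib

/-- A set `S` is a total dominating set of the digraph `D` (given as its arc
relation) if every vertex has an in-neighbor belonging to `S`. -/
def TotalDomSet {V : Type} (D : V → V → Prop) (S : Set V) : Prop :=
  ∀ v : V, ∃ u ∈ S, D u v

/-- The total domination number of a digraph: the least cardinality of a total
dominating set. -/
noncomputable def totalDomNum {V : Type} (D : V → V → Prop) : ℕ :=
  sInf {n | ∃ S : Set V, TotalDomSet D S ∧ S.ncard = n}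

/-- `D` is an orientation of the simple graph `G`: every arc of `D` lies on an
edge of `G`, and every edge of `G` carries exactly one of the two possible arcs. -/
def IsOrientation {V : Type} (G : SimpleGraph V) (D : V → V → Prop) : Prop :=
  (∀ u v : V, D u v → G.Adj u v) ∧ ∀ u v : V, G.Adj u v → (D u v ↔ ¬ D v u)

/-- An orientation (digraph) is valid if every vertex has at least one in-neighbor. -/
def IsValidOrientation {V : Type} (D : V → V → Prop) : Prop :=
  ∀ v : V, ∃ u : V, D u v

/-- The upper orientable total domination number of `G`. -/
noncomputable def DOMt {V : Type} [Fintype V] (G : SimpleGraph V) : ℕ :=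
  sSup {n | ∃ D : V → V → Prop, IsOrientation G D ∧ IsValidOrientation D ∧ totalDomNum D = n}

/-- The lower orientable total domination number of `G`. -/
noncomputable def domt {V : Type} [Fintype V] (G : SimpleGraph V) : ℕ :=
  sInf {n | ∃ D : V → V → Prop, IsOrientation G D ∧ IsValidOrientation D ∧ totalDomNum D = n}

/-! Choosing an in-neighbor of every vertex gives a map whose range is total dominating, so when
`γ_t(D) = |V|` every such choice is a bijection. Changing a choice at one vertex would destroy
bijectivity, hence in-neighbors are unique and the arcs of `D` are `σ v → v` for a permutation `σ`.
Since `D` has no opposite arcs, the two neighbors `σ v` and `σ⁻¹ v` of `v` in `G` are distinct. -/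

theorem eq_apply_of_injective_of_surjective_update {α β : Type*} [DecidableEq α] {f : α → β}
    (hinj : Function.Injective f) {a : α} {b : β}
    (hsurj : Function.Surjective (Function.update f a b)) : b = f a := by
  obtain ⟨c, hc⟩ := hsurj (f a)
  obtain rfl | hca := eq_or_ne c a
  · rwa [Function.update_self] at hc
  · rw [Function.update_of_ne hca] at hc
    exact absurd (hinj hc) hca

section TotalDomination

variable {V : Type} {D : V → V → Prop}

theorem TotalDomSet.totalDomNum_le_ncard {S : Set V} (hS : TotalDomSet D S) :
    totalDomNum D ≤ S.ncard :=
  Nat.sInf_le ⟨S, hS, rfl⟩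

theorem TotalDomSet.eq_univ_of_totalDomNum_eq_card [Finite V] {S : Set V}
    (hS : TotalDomSet D S) (hγ : totalDomNum D = Nat.card V) : S = Set.univ := by
  have hcard : Nat.card V ≤ S.ncard := hγ ▸ hS.totalDomNum_le_ncard
  rw [← Set.ncard_univ] at hcard
  exact Set.eq_of_subset_of_ncard_le S.subset_univ hcard

theorem totalDomSet_range {f : V → V} (hf : ∀ v, D (f v) v) : TotalDomSet D (Set.range f) :=
  fun v ↦ ⟨f v, Set.mem_range_self v, hf v⟩

theorem bijective_of_totalDomNum_eq_card [Finite V] (hγ : totalDomNum D = Nat.card V)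
    {f : V → V} (hf : ∀ v, D (f v) v) : Function.Bijective f :=
  Function.Surjective.bijective_of_finite <|
    Set.range_eq_univ.mp ((totalDomSet_range hf).eq_univ_of_totalDomNum_eq_card hγ)

theorem eq_apply_of_totalDomNum_eq_card [Finite V] (hγ : totalDomNum D = Nat.card V)
    {f : V → V} (hf : ∀ v, D (f v) v) {u v : V} (huv : D u v) : u = f v := by
  classical
  have hupdate : ∀ w, D (Function.update f v u w) w :=
    (Function.forall_update_iff f fun w x ↦ D x w).mpr ⟨huv, fun w _ ↦ hf w⟩
  exact eq_apply_of_injective_of_surjective_update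
    (bijective_of_totalDomNum_eq_card hγ hf).injective
    (bijective_of_totalDomNum_eq_card hγ hupdate).surjective

theorem exists_perm_of_totalDomNum_eq_card [Finite V] (hvalid : IsValidOrientation D)
    (hγ : totalDomNum D = Nat.card V) : ∃ σ : Equiv.Perm V, ∀ u v, D u v ↔ u = σ v := by
  choose f hf using hvalid
  refine ⟨Equiv.ofBijective f (bijective_of_totalDomNum_eq_card hγ hf), fun u v ↦ ?_⟩
  exact ⟨eq_apply_of_totalDomNum_eq_card hγ hf, fun huv ↦ huv ▸ hf v⟩

end TotalDomination

namespace IsOrientation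

variable {V : Type} {G : SimpleGraph V} {D : V → V → Prop}

theorem asymm (hor : IsOrientation G D) {u v : V} (huv : D u v) : ¬ D v u :=
  (hor.2 u v (hor.1 u v huv)).mp huv

theorem adj_iff (hor : IsOrientation G D) {u v : V} : G.Adj u v ↔ D u v ∨ D v u := by
  constructor
  · intro hadj
    exact or_iff_not_imp_right.mpr (hor.2 u v hadj).mpr
  · rintro (huv | hvu)
    · exact hor.1 u v huv
    · exact (hor.1 v u hvu).symm

theorem neighborSet_eq_pair (hor : IsOrientation G D) {σ : Equiv.Perm V}
    (hσ : ∀ u v, D u v ↔ u = σ v) (v : V) : G.neighborSet v = {σ v, σ.symm v} := by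
  ext w
  rw [SimpleGraph.mem_neighborSet, hor.adj_iff, hσ, hσ, Set.mem_insert_iff,
    Set.mem_singleton_iff, Equiv.eq_symm_apply, or_comm, eq_comm (a := v)]

theorem apply_ne_symm_apply (hor : IsOrientation G D) {σ : Equiv.Perm V}
    (hσ : ∀ u v, D u v ↔ u = σ v) (v : V) : σ v ≠ σ.symm v := by
  intro heq
  have hout : D v (σ.symm v) := (hσ _ _).mpr (σ.apply_symm_apply v).symm
  have hin : D (σ.symm v) v := (hσ _ _).mpr heq.symm
  exact hor.asymm hout hin

end IsOrientation

/-- If a finite simple graph has a valid orientation with total domination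
number `|V(G)|`, then `G` is 2-regular, i.e. a disjoint union of cycles. -/
theorem stmt_9 {V : Type} [Fintype V] (G : SimpleGraph V) (D : V → V → Prop)
    (hor : IsOrientation G D) (hvalid : IsValidOrientation D)
    (hγ : totalDomNum D = Fintype.card V) :
    ∀ v : V, (G.neighborSet v).ncard = 2 := by
  have hcard : totalDomNum D = Nat.card V := hγ.trans Nat.card_eq_fintype_card.symm
  obtain ⟨σ, hσ⟩ := exists_perm_of_totalDomNum_eq_card hvalid hcard
  intro v
  rw [hor.neighborSet_eq_pair hσ v]
  exact Set.ncard_pair (hor.apply_ne_symm_apply hσ v)
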